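/- Let q > 2 be an even prime power, r ≥ 3, and let B be the hypersurface of PG(r,q²) defined below (with the stated conditions on α and β). Then the projective code C(B) is not a minimal code; more precisely, a nonzero codeword of C(B) is non-minimal if and only if it corresponds to a nonzero scalar multiple of the functional X₀, and these are exactly the q²−1 codewords of weight q^{2r−1}. -/

import Mathlib

/-- The affine equation
`x_r^q − x_r + α^q(x₁^{2q}+⋯+x_{r−1}^{2q}) − α(x₁²+⋯+x_{r−1}²)
  = (β^q−β)(x₁^{q+1}+⋯+x_{r−1}^{q+1})`. -/
def affEq {F : Type*} [Field F] (q r : ℕ) (α β : F) (x : Fin (r + 1) → F) : Prop :=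
  x (Fin.last r) ^ q - x (Fin.last r)
      + α ^ q * (∑ i : Fin (r + 1), if 1 ≤ i.1 ∧ i.1 < r then x i ^ (2 * q) else 0)
      - α * (∑ i : Fin (r + 1), if 1 ≤ i.1 ∧ i.1 < r then x i ^ 2 else 0)
    = (β ^ q - β) * (∑ i : Fin (r + 1), if 1 ≤ i.1 ∧ i.1 < r then x i ^ (q + 1) else 0)

/-- The hypersurface `B` of `PG(r,q²)` (in the `q` even form): the affine points
(X₀ ≠ 0) whose affine coordinates satisfy `affEq`, together with the points at
infinity (X₀ = 0) satisfying `X₁ + ⋯ + X_{r−1} = 0`. -/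
noncomputable def BsetE (F : Type*) [Field F] (q r : ℕ) (α β : F) :
    Set (Projectivization F (Fin (r + 1) → F)) :=
  {P | (P.rep 0 ≠ 0 ∧ affEq q r α β fun i => P.rep i / P.rep 0) ∨
       (P.rep 0 = 0 ∧ (∑ i : Fin (r + 1), if 1 ≤ i.1 ∧ i.1 < r then P.rep i else 0) = 0)}

/-- The codeword of the projective code associated to the projective system `V`
corresponding to the linear functional `f`. -/
noncomputable def cw {F W : Type*} [Field F] [AddCommGroup W] [Module F W]
    (V : Set (Projectivization F W)) (f : Module.Dual F W) : ↥V → F :=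
  fun P => f P.1.rep

/-- A nonzero codeword is minimal if every nonzero codeword whose support is contained
in its support is a scalar multiple of it. -/
def IsMinimalWord {F W : Type*} [Field F] [AddCommGroup W] [Module F W]
    (V : Set (Projectivization F W)) (f : Module.Dual F W) : Prop :=
  cw V f ≠ 0 ∧ ∀ g : Module.Dual F W, cw V g ≠ 0 →
    (∀ P : ↥V, cw V g P ≠ 0 → cw V f P ≠ 0) → ∃ a : F, cw V g = a • cw V f

/-- The projective code of `V` is a minimal code if all of its nonzero codewords
are minimal. -/
def IsMinimalCode {F W : Type*} [Field F] [AddCommGroup W] [Module F W]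
    (V : Set (Projectivization F W)) : Prop :=
  ∀ f : Module.Dual F W, cw V f ≠ 0 → IsMinimalWord V f

/-!
Write `W` for the ambient vector space and `ℓ = X₁ + ⋯ + X_{r-1}`. The part of `B` at infinity is
linear, cut out by `X₀ = ℓ = 0`, whereas every affine hyperplane contains more than `|W| / |F| ^ 3`
affine points of `B`. If the support of the codeword of `g` lies in that of `f`, then `g` vanishes
on `B ∩ ker f`. At infinity this forces `g` into the span of `ℓ`, `X₀` and `f`, and the affine
points, being too many for `ℓ` to be constant on them, reduce this to a multiple of `f`, unless `f`
itself is a multiple of `X₀`. For `X₀` the support strictly contains that of `ℓ`. The same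
inequality shows that `X₀` has the largest weight.
-/

section Counting

open Module

theorem ncard_fiber_mul_natCard {G H : Type*} [AddGroup G] [AddGroup H] (f : G →+ H)
    (hf : Function.Surjective f) (y : H) :
    (f ⁻¹' {y}).ncard * Nat.card H = Nat.card G := by
  rw [← Nat.card_coe_set_eq, Nat.card_congr (f.fiberEquivKerOfSurjective hf y),
    ← Nat.card_congr (AddSubgroup.topEquiv (G := H)).toEquiv, ← AddMonoidHom.range_eq_top.2 hf,
    ← AddSubgroup.index_ker, AddSubgroup.card_mul_index]

theorem ncard_setOf_map_snd_eq {X G H : Type*} [AddGroup G] [AddGroup H]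
    (T : G →+ H) (hT : Function.Surjective T) (s : Set X) (φ : X → H) :
    {p : X × G | p.1 ∈ s ∧ T p.2 = φ p.1}.ncard = s.ncard * Nat.card T.ker := by
  have e : {p : X × G | p.1 ∈ s ∧ T p.2 = φ p.1} ≃ s × T.ker :=
    { toFun := fun p => (⟨p.1.1, p.2.1⟩, T.fiberEquivKerOfSurjective hT (φ p.1.1) ⟨p.1.2, p.2.2⟩)
      invFun := fun p => ⟨(p.1.1, ((T.fiberEquivKerOfSurjective hT (φ p.1.1)).symm p.2).1), p.1.2,
        ((T.fiberEquivKerOfSurjective hT (φ p.1.1)).symm p.2).2⟩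
      left_inv := fun p => by simp
      right_inv := fun p => Prod.ext rfl (Equiv.apply_symm_apply _ _) }
  rw [← Nat.card_coe_set_eq, Nat.card_congr e, Nat.card_prod, Nat.card_coe_set_eq]

theorem pow_lt_ncard_setOf_sum_eq {X G : Type*} [Finite X] [AddCommGroup G] {k : ℕ}
    (g : Fin (k + 2) → X → G) (h0 : Function.Surjective (g 0)) (h0' : ¬ Function.Injective (g 0))
    (h1 : Function.Surjective (g 1)) (c : G) :
    Nat.card X ^ (k + 1) < {x : Fin (k + 2) → X | ∑ i, g i (x i) = c}.ncard := by
  -- Solving for the first coordinate embeds `X ^ (k + 1)` in the solution set, and this misses a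
  -- solution because some fibre of `g 0` has two elements.
  choose s hs using fun z : Fin (k + 1) → X => h0 (c - ∑ i, g i.succ (z i))
  have mem_iff (a : X) (z : Fin (k + 1) → X) :
      Fin.cons a z ∈ {x : Fin (k + 2) → X | ∑ i, g i (x i) = c} ↔
        g 0 a = c - ∑ i, g i.succ (z i) := by
    simp [Fin.sum_univ_succ, eq_sub_iff_add_eq]
  have section_ssubset : Set.range (fun z => (Fin.cons (s z) z : Fin (k + 2) → X)) ⊂
      {x | ∑ i, g i (x i) = c} := by
    refine (Set.ssubset_iff_of_subset ?_).2 ?_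
    · rintro _ ⟨z, rfl⟩
      exact (mem_iff _ _).2 (hs z)
    obtain ⟨a, b, hab, hne⟩ : ∃ a b, g 0 a = g 0 b ∧ a ≠ b := by
      simpa [Function.Injective] using h0'
    obtain ⟨y, hy⟩ := h1 (c - g 0 a - ∑ i : Fin k, g i.succ.succ a)
    let z : Fin (k + 1) → X := Fin.cons y fun _ => a
    have hz : g 0 a = c - ∑ i, g i.succ (z i) := by
      simp [z, Fin.sum_univ_succ, hy]
    by_cases hsz : s z = a
    · refine ⟨Fin.cons b z, (mem_iff _ _).2 (hab ▸ hz), ?_⟩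
      rintro ⟨w, hw⟩
      obtain ⟨hwb, rfl⟩ := Fin.cons_inj.1 hw
      exact hne (hsz.symm.trans hwb)
    · refine ⟨Fin.cons a z, (mem_iff _ _).2 hz, ?_⟩
      rintro ⟨w, hw⟩
      obtain ⟨hwa, rfl⟩ := Fin.cons_inj.1 hw
      exact hsz hwa
  have section_injective :
      Function.Injective fun z => (Fin.cons (s z) z : Fin (k + 2) → X) :=
    fun z w hzw => (Fin.cons_inj.1 hzw).2
  calc Nat.card X ^ (k + 1) = Nat.card (Fin (k + 1) → X) := by
        rw [Nat.card_fun, Nat.card_fin]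
    _ = _ := (Set.ncard_range_of_injective section_injective).symm
    _ < _ := Set.ncard_lt_ncard section_ssubset

variable {F W : Type*} [Field F] [AddCommGroup W] [Module F W]

theorem pi_surjective_of_linearIndependent {ι : Type*} [Finite ι] {φ : ι → Dual F W}
    (hφ : LinearIndependent F φ) : Function.Surjective (LinearMap.pi φ) := by
  have hφ' : LinearIndependent F fun i v => φ i v :=
    hφ.map' (LinearMap.ltoFun F W F F) (LinearMap.ker_eq_bot.2 DFunLike.coe_injective)
  rw [← LinearMap.range_eq_top, ← span_flip_eq_top_iff_linearIndependent.2 hφ']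
  exact (Submodule.span_eq (LinearMap.range (LinearMap.pi φ))).symm

theorem ncard_setOf_forall_dual_eq_mul_pow {n : ℕ} {φ : Fin n → Dual F W}
    (hφ : LinearIndependent F φ) (c : Fin n → F) :
    {v | ∀ i, φ i v = c i}.ncard * Nat.card F ^ n = Nat.card W := by
  have hfiber := ncard_fiber_mul_natCard (LinearMap.pi φ).toAddMonoidHom
    (pi_surjective_of_linearIndependent hφ) c
  rw [Nat.card_fun, Nat.card_fin] at hfiber
  rw [← hfiber]
  congr 2
  ext v
  simp [funext_iff]

end Counting

section ProjectiveSystems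

open Module
open scoped LinearAlgebra.Projectivization

variable {F W : Type*} [Field F] [AddCommGroup W] [Module F W]

/-- The punctured affine cone over a set of projective points: the nonzero vectors whose class
lies in the set. It lets codewords be handled without reference to the chosen representatives. -/
def vectorCone (B : Set (ℙ F W)) : Set W :=
  {v | ∃ hv : v ≠ 0, Projectivization.mk F v hv ∈ B}

theorem rep_mem_vectorCone {B : Set (ℙ F W)} {P : ℙ F W} (hP : P ∈ B) :
    P.rep ∈ vectorCone B :=
  ⟨P.rep_nonzero, by rwa [P.mk_rep]⟩

theorem dual_rep_mk_eq_zero_iff (f : Dual F W) {v : W} (hv : v ≠ 0) :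
    f (Projectivization.mk F v hv).rep = 0 ↔ f v = 0 := by
  obtain ⟨a, ha⟩ := Projectivization.exists_smul_eq_mk_rep F v hv
  rw [← ha, Units.smul_def, map_smul, smul_eq_zero, or_iff_right a.ne_zero]

theorem ncard_eq_ncard_normalized {B : Set (ℙ F W)} {S : Set B} (f : Dual F W)
    (hf : ∀ P ∈ S, f P.1.rep ≠ 0) :
    S.ncard = {v ∈ vectorCone (Subtype.val '' S) | f v = 1}.ncard := by
  refine Set.ncard_congr (fun P _ => (f P.1.rep)⁻¹ • P.1.rep) ?_ ?_ ?_
  · intro P hP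
    have hne := smul_ne_zero (inv_ne_zero (hf P hP)) P.1.rep_nonzero
    have hmk : Projectivization.mk F _ hne = P.1 := by
      conv_rhs => rw [← P.1.mk_rep]
      exact (Projectivization.mk_eq_mk_iff' F _ _ _ _).2 ⟨_, rfl⟩
    exact ⟨⟨hne, P, hP, hmk.symm⟩, by simp [hf P hP]⟩
  · intro P Q hP _ hPQ
    have hPQ' : P.1.rep = (f P.1.rep * (f Q.1.rep)⁻¹) • Q.1.rep := by
      rw [mul_smul, ← hPQ, smul_inv_smul₀ (hf P hP)]
    rw [Subtype.ext_iff, ← P.1.mk_rep, ← Q.1.mk_rep]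
    exact (Projectivization.mk_eq_mk_iff' F _ _ _ _).2 ⟨_, hPQ'.symm⟩
  · rintro v ⟨⟨hv, P, hP, hPv⟩, hfv⟩
    obtain ⟨a, ha⟩ := Projectivization.exists_smul_eq_mk_rep F v hv
    refine ⟨P, hP, ?_⟩
    rw [hPv, ← ha, Units.smul_def, map_smul, hfv, smul_eq_mul, mul_one,
      inv_smul_smul₀ a.ne_zero]

theorem ncard_support_cw (B : Set (ℙ F W)) (f : Dual F W) :
    (cw B f).support.ncard = {v ∈ vectorCone B | f v = 1}.ncard := by
  rw [ncard_eq_ncard_normalized (S := (cw B f).support) f fun P hP => hP]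
  congr 1
  ext v
  refine and_congr_left fun hfv => exists_congr fun hv => ⟨?_, fun hvB => ⟨⟨_, hvB⟩, ?_, rfl⟩⟩
  · rintro ⟨P, -, hPv⟩
    exact hPv ▸ P.2
  · exact (dual_rep_mk_eq_zero_iff f hv).not.2 (by simp [hfv])

theorem ncard_support_cw_diff (B : Set (ℙ F W)) (f g : Dual F W) :
    ((cw B f).support \ (cw B g).support).ncard =
      {v ∈ vectorCone B | g v = 0 ∧ f v = 1}.ncard := by
  rw [ncard_eq_ncard_normalized f fun P hP => hP.1]
  congr 1
  ext v
  constructor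
  · rintro ⟨⟨hv, P, ⟨-, hPg⟩, hPv⟩, hfv⟩
    refine ⟨⟨hv, hPv ▸ P.2⟩, (dual_rep_mk_eq_zero_iff g hv).1 ?_, hfv⟩
    exact hPv ▸ Function.notMem_support.1 hPg
  · rintro ⟨⟨hv, hvB⟩, hgv, hfv⟩
    refine ⟨⟨hv, ⟨_, hvB⟩, ⟨?_, ?_⟩, rfl⟩, hfv⟩
    · exact (dual_rep_mk_eq_zero_iff f hv).not.2 (by simp [hfv])
    · exact Function.notMem_support.2 ((dual_rep_mk_eq_zero_iff g hv).2 hgv)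

theorem support_cw_subset_iff {B : Set (ℙ F W)} {f g : Dual F W} :
    (cw B g).support ⊆ (cw B f).support ↔ ∀ v ∈ vectorCone B, f v = 0 → g v = 0 := by
  constructor
  · rintro hsub v ⟨hv, hvB⟩ hfv
    by_contra hgv
    have hmem := hsub (a := ⟨_, hvB⟩) ((dual_rep_mk_eq_zero_iff g hv).not.2 hgv)
    exact hmem ((dual_rep_mk_eq_zero_iff f hv).2 hfv)
  · exact fun h P hgP hfP => hgP (h _ (rep_mem_vectorCone P.2) hfP)

end ProjectiveSystems

section HyperplaneRich

open Module
open scoped LinearAlgebra.Projectivization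

variable {F W : Type*} [Field F] [AddCommGroup W] [Module F W]

/-- A set `B` of projective points that is sparse at infinity and dense in the affine part, with
`h = 0` as the hyperplane at infinity: `B` meets `h = 0` exactly in the points of the further
hyperplane `ℓ = 0`, while every other hyperplane contains more affine points of `B`, normalized by
`h = 1`, than there are vectors in a fibre of three independent functionals. -/
structure IsHyperplaneRich (B : Set (ℙ F W)) (h ℓ : Dual F W) : Prop where
  mem_iff : ∀ v ≠ 0, h v = 0 → (v ∈ vectorCone B ↔ ℓ v = 0)
  notMem_span : ℓ ∉ F ∙ h
  card_lt : ∀ f ∉ F ∙ h,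
    Nat.card W < {v ∈ vectorCone B | f v = 0 ∧ h v = 1}.ncard * Nat.card F ^ 3

namespace IsHyperplaneRich

variable {B : Set (ℙ F W)} {h ℓ f g : Dual F W}

theorem exists_affine_mem (hB : IsHyperplaneRich B h ℓ) (hf : f ∉ F ∙ h) :
    ∃ v ∈ vectorCone B, f v = 0 ∧ h v = 1 :=
  Set.nonempty_of_ncard_ne_zero <|
    left_ne_zero_of_mul (Nat.zero_lt_of_lt (hB.card_lt f hf)).ne'

theorem ne_zero (hB : IsHyperplaneRich B h ℓ) : h ≠ 0 := by
  rintro rfl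
  obtain ⟨v, -, -, hv⟩ := hB.exists_affine_mem hB.notMem_span
  exact zero_ne_one hv

theorem cw_eq_zero_iff (hB : IsHyperplaneRich B h ℓ) : cw B f = 0 ↔ f = 0 := by
  refine ⟨fun hf0 => ?_, fun hf0 => hf0 ▸ rfl⟩
  have hf : ∀ v ∈ vectorCone B, f v = 0 := fun v hv =>
    support_cw_subset_iff (f := 0).1 (by simp [hf0]) v hv rfl
  by_cases hfh : f ∈ F ∙ h
  · obtain ⟨a, rfl⟩ := Submodule.mem_span_singleton.1 hfh
    obtain ⟨v, hv, -, hv1⟩ := hB.exists_affine_mem hB.notMem_span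
    have ha : a = 0 := by simpa [hv1] using hf v hv
    rw [ha, zero_smul]
  · have hfh' : f - h ∉ F ∙ h := fun hmem =>
      hfh <| (Submodule.sub_mem_iff_left _ (Submodule.mem_span_singleton_self h)).1 hmem
    obtain ⟨v, hv, hfv, hv1⟩ := hB.exists_affine_mem hfh'
    rw [LinearMap.sub_apply, hf v hv, hv1] at hfv
    simp at hfv

theorem cw_injective (hB : IsHyperplaneRich B h ℓ) : Function.Injective (cw B) := fun f g hfg =>
  sub_eq_zero.1 <| hB.cw_eq_zero_iff.1 <|
    show cw B f - cw B g = 0 from sub_eq_zero.2 hfg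

theorem not_isMinimalWord_smul (hB : IsHyperplaneRich B h ℓ) {c : F} (hc : c ≠ 0) :
    ¬ IsMinimalWord B (c • h) := by
  rintro ⟨-, hmin⟩
  have hsupport : (cw B ℓ).support ⊆ (cw B (c • h)).support := by
    refine support_cw_subset_iff.2 fun v hv hcv => ?_
    have hhv : h v = 0 := (smul_eq_zero.1 hcv).resolve_left hc
    obtain ⟨hv0, -⟩ := id hv
    exact (hB.mem_iff v hv0 hhv).1 hv
  have hℓ : ℓ ≠ 0 := fun h0 => hB.notMem_span (h0 ▸ zero_mem _)
  obtain ⟨a, ha⟩ := hmin ℓ (hB.cw_eq_zero_iff.not.2 hℓ) fun P hP => hsupport hP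
  have hℓh : ℓ = a • c • h := hB.cw_injective ha
  exact hB.notMem_span (Submodule.mem_span_singleton.2 ⟨a * c, by rw [hℓh, mul_smul]⟩)

theorem not_isMinimalCode (hB : IsHyperplaneRich B h ℓ) : ¬ IsMinimalCode B := fun hmin =>
  hB.not_isMinimalWord_smul one_ne_zero <|
    hmin _ (hB.cw_eq_zero_iff.not.2 (smul_ne_zero one_ne_zero hB.ne_zero))

theorem linearIndependent_or_eq_add (hB : IsHyperplaneRich B h ℓ) (hf : f ∉ F ∙ h) :
    LinearIndependent F ![ℓ, h, f] ∨ ∃ a b : F, ℓ = a • h + b • f := by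
  have hpair : LinearIndependent F ![h, f] :=
    (LinearIndependent.pair_iff' hB.ne_zero).2 fun a ha =>
      hf (Submodule.mem_span_singleton.2 ⟨a, ha⟩)
  by_cases hℓ : ℓ ∈ Submodule.span F (Set.range ![h, f])
  · rw [Matrix.range_cons_cons_empty, Submodule.mem_span_pair] at hℓ
    obtain ⟨a, b, hab⟩ := hℓ
    exact Or.inr ⟨a, b, hab.symm⟩
  · exact Or.inl (linearIndependent_finCons.2 ⟨hpair, hℓ⟩)

theorem ncard_fiber_lt_ncard_affine (hB : IsHyperplaneRich B h ℓ) (hf : f ∉ F ∙ h)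
    (hind : LinearIndependent F ![ℓ, h, f]) (a b c : F) :
    {v | ℓ v = a ∧ h v = b ∧ f v = c}.ncard < {v ∈ vectorCone B | f v = 0 ∧ h v = 1}.ncard := by
  have hfiber := ncard_setOf_forall_dual_eq_mul_pow hind ![a, b, c]
  simp only [Fin.forall_fin_succ, Matrix.cons_val_zero, Matrix.cons_val_succ, IsEmpty.forall_iff,
    and_true] at hfiber
  exact lt_of_mul_lt_mul_right (hfiber ▸ hB.card_lt f hf) (Nat.zero_le _)

variable [Finite W]

theorem eq_zero_of_affine_eq_zero (hB : IsHyperplaneRich B h ℓ) (hf : f ∉ F ∙ h)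
    (hind : LinearIndependent F ![ℓ, h, f]) {a b : F}
    (hab : ∀ v ∈ vectorCone B, f v = 0 → h v = 1 → a * ℓ v + b = 0) : a = 0 := by
  by_contra ha
  refine (hB.ncard_fiber_lt_ncard_affine hf hind (-b / a) 1 0).not_ge (Set.ncard_le_ncard ?_)
  rintro v ⟨hv, hfv, hhv⟩
  refine ⟨?_, hhv, hfv⟩
  rw [eq_div_iff ha, mul_comm]
  exact eq_neg_of_add_eq_zero_left (hab v hv hfv hhv)

theorem exists_eq_add_of_forall_eq_zero (hB : IsHyperplaneRich B h ℓ) (hf : f ∉ F ∙ h)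
    (hg : ∀ v ∈ vectorCone B, f v = 0 → g v = 0) : ∃ a b : F, g = a • h + b • f := by
  have hgspan : g ∈ Submodule.span F (Set.range ![ℓ, h, f]) := by
    refine mem_span_of_iInf_ker_le_ker fun v hv => ?_
    simp only [Submodule.mem_iInf, LinearMap.mem_ker, Fin.forall_fin_succ, Matrix.cons_val_zero,
      Matrix.cons_val_succ, IsEmpty.forall_iff, and_true] at hv
    obtain ⟨hℓv, hhv, hfv⟩ := hv
    rcases eq_or_ne v 0 with rfl | hv0
    · exact map_zero g
    · exact hg v ((hB.mem_iff v hv0 hhv).2 hℓv) hfv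
  obtain ⟨c, rfl⟩ := (Submodule.mem_span_range_iff_exists_fun F).1 hgspan
  simp only [Fin.sum_univ_three, Matrix.cons_val] at hg ⊢
  rcases hB.linearIndependent_or_eq_add hf with hind | ⟨a, b, rfl⟩
  · have hc0 : c 0 = 0 := hB.eq_zero_of_affine_eq_zero hf hind (b := c 1) fun v hv hfv hhv => by
      simpa [hfv, hhv] using hg v hv hfv
    exact ⟨c 1, c 2, by rw [hc0, zero_smul, zero_add]⟩
  · exact ⟨c 0 * a + c 1, c 0 * b + c 2, by module⟩

theorem mem_span_of_forall_eq_zero (hB : IsHyperplaneRich B h ℓ) (hf : f ∉ F ∙ h)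
    (hg : ∀ v ∈ vectorCone B, f v = 0 → g v = 0) : g ∈ F ∙ f := by
  obtain ⟨a, b, rfl⟩ := hB.exists_eq_add_of_forall_eq_zero hf hg
  obtain ⟨v, hv, hfv, hhv⟩ := hB.exists_affine_mem hf
  have ha : a = 0 := by simpa [hfv, hhv] using hg v hv hfv
  exact Submodule.mem_span_singleton.2 ⟨b, by rw [ha, zero_smul, zero_add]⟩

theorem isMinimalWord_of_notMem_span (hB : IsHyperplaneRich B h ℓ) (hf : f ∉ F ∙ h) :
    IsMinimalWord B f := by
  refine ⟨hB.cw_eq_zero_iff.not.2 fun h0 => hf (h0 ▸ zero_mem _), fun g _ hgf => ?_⟩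
  obtain ⟨a, rfl⟩ := Submodule.mem_span_singleton.1 <|
    hB.mem_span_of_forall_eq_zero hf (support_cw_subset_iff.1 fun P hP => hgf P hP)
  exact ⟨a, rfl⟩

theorem not_isMinimalWord_iff (hB : IsHyperplaneRich B h ℓ) (hf : cw B f ≠ 0) :
    ¬ IsMinimalWord B f ↔ ∃ c : F, c ≠ 0 ∧ f = c • h := by
  refine ⟨fun hmin => ?_, fun ⟨c, hc, hfc⟩ => hfc ▸ hB.not_isMinimalWord_smul hc⟩
  have hfh : f ∈ F ∙ h := not_imp_comm.1 hB.isMinimalWord_of_notMem_span hmin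
  obtain ⟨c, rfl⟩ := Submodule.mem_span_singleton.1 hfh
  refine ⟨c, fun hc => hf ?_, rfl⟩
  rw [hB.cw_eq_zero_iff, hc, zero_smul]

theorem ncard_infinity_lt_ncard_affine (hB : IsHyperplaneRich B h ℓ) (hf : f ∉ F ∙ h) :
    {v ∈ vectorCone B | h v = 0 ∧ f v = 1}.ncard <
      {v ∈ vectorCone B | f v = 0 ∧ h v = 1}.ncard := by
  have hsub : {v ∈ vectorCone B | h v = 0 ∧ f v = 1} ⊆ {v | ℓ v = 0 ∧ h v = 0 ∧ f v = 1} :=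
    fun v ⟨⟨hv, hvB⟩, hhv, hfv⟩ => ⟨(hB.mem_iff v hv hhv).1 ⟨hv, hvB⟩, hhv, hfv⟩
  refine (Set.ncard_le_ncard hsub).trans_lt ?_
  rcases hB.linearIndependent_or_eq_add hf with hind | ⟨a, b, hℓ⟩
  · exact hB.ncard_fiber_lt_ncard_affine hf hind 0 0 1
  · have hempty : {v | ℓ v = 0 ∧ h v = 0 ∧ f v = 1} = ∅ := by
      refine Set.eq_empty_of_forall_notMem fun v ⟨hℓv, hhv, hfv⟩ => hB.notMem_span ?_
      have hb : b = 0 := by simpa [hℓ, hhv, hfv] using hℓv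
      exact Submodule.mem_span_singleton.2 ⟨a, by rw [hℓ, hb, zero_smul, add_zero]⟩
    rw [hempty, Set.ncard_empty, Set.ncard_pos]
    exact hB.exists_affine_mem hf

theorem ncard_support_cw_lt (hB : IsHyperplaneRich B h ℓ) (hf : f ∉ F ∙ h) :
    (cw B f).support.ncard < (cw B h).support.ncard := by
  rw [Set.ncard_lt_ncard_iff_ncard_sdiff_lt_ncard_sdiff, ncard_support_cw_diff,
    ncard_support_cw_diff]
  exact hB.ncard_infinity_lt_ncard_affine hf

theorem ncard_support_cw_eq_iff (hB : IsHyperplaneRich B h ℓ) :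
    (cw B f).support.ncard = (cw B h).support.ncard ↔ ∃ c : F, c ≠ 0 ∧ f = c • h := by
  constructor
  · intro heq
    have hfh : f ∈ F ∙ h := by_contra fun hfh => (hB.ncard_support_cw_lt hfh).ne heq
    obtain ⟨c, rfl⟩ := Submodule.mem_span_singleton.1 hfh
    refine ⟨c, ?_, rfl⟩
    rintro rfl
    have hsupport : (cw B h).support = ∅ := by
      rw [← Set.ncard_eq_zero, ← heq, Set.ncard_eq_zero, Function.support_eq_empty_iff,
        hB.cw_eq_zero_iff, zero_smul]
    exact hB.ne_zero (hB.cw_eq_zero_iff.1 (Function.support_eq_empty_iff.1 hsupport))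
  · rintro ⟨c, hc, rfl⟩
    exact congrArg Set.ncard (Function.support_const_smul_of_ne_zero c (cw B h) hc)

theorem ncard_setOf_ncard_support_eq (hB : IsHyperplaneRich B h ℓ) :
    {w | (∃ f, w = cw B f) ∧ w.support.ncard = (cw B h).support.ncard}.ncard =
      Nat.card F - 1 := by
  have hinj : Function.Injective fun a : Fˣ => cw B (a • h) := fun a b hab =>
    Units.ext (smul_left_injective F hB.ne_zero (hB.cw_injective hab))
  have hrange : {w | (∃ f, w = cw B f) ∧ w.support.ncard = (cw B h).support.ncard} =
      Set.range fun a : Fˣ => cw B (a • h) := by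
    ext w
    constructor
    · rintro ⟨⟨f, rfl⟩, hf⟩
      obtain ⟨c, hc, rfl⟩ := hB.ncard_support_cw_eq_iff.1 hf
      exact ⟨Units.mk0 c hc, rfl⟩
    · rintro ⟨a, rfl⟩
      exact ⟨⟨_, rfl⟩, hB.ncard_support_cw_eq_iff.2 ⟨a, a.ne_zero, rfl⟩⟩
  rw [hrange, Set.ncard_range_of_injective hinj, Nat.card_units]

end IsHyperplaneRich

end HyperplaneRich

section Involution

variable {F : Type*} [Field F] [StarRing F]

/-- The trace `x ↦ x + star x` of a field over the fixed field of an involution. -/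
def starTrace : F →+ selfAdjoint F where
  toFun x := ⟨x + star x, IsSelfAdjoint.add_star_self x⟩
  map_zero' := Subtype.ext (by simp)
  map_add' x y := Subtype.ext (by simp only [star_add, AddSubgroup.coe_add]; ring)

/-- The norm `x ↦ x * star x` of a field over the fixed field of an involution. -/
def starNorm (x : F) : selfAdjoint F :=
  ⟨x * star x, IsSelfAdjoint.mul_star_self x⟩

/-- The form `x ↦ Tr(α x²) + δ N(x)` which each of the affine coordinates `x₁, …, x_{r-1}`
contributes to the equation of the hypersurface. -/
def quasiHermitianForm (α : F) (δ : selfAdjoint F) (x : F) : selfAdjoint F :=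
  starTrace (α * x ^ 2) + δ * starNorm x

theorem starTrace_coe_mul (t : selfAdjoint F) (x : F) :
    starTrace ((t : F) * x) = t * starTrace x :=
  Subtype.ext <| by
    simp only [starTrace, AddMonoidHom.coe_mk, ZeroHom.coe_mk, star_mul', selfAdjoint.val_mul,
      selfAdjoint.star_val_eq]
    ring

theorem quasiHermitianForm_coe_mul (α : F) (δ t : selfAdjoint F) (x : F) :
    quasiHermitianForm α δ (t * x) = t ^ 2 * quasiHermitianForm α δ x := by
  have hα : α * (t * x) ^ 2 = ((t ^ 2 : selfAdjoint F) : F) * (α * x ^ 2) := by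
    rw [selfAdjoint.val_pow]
    ring
  have hnorm : starNorm ((t : F) * x) = t ^ 2 * starNorm x :=
    Subtype.ext <| by
      simp only [starNorm, star_mul', selfAdjoint.star_val_eq, selfAdjoint.val_mul,
        selfAdjoint.val_pow]
      ring
  rw [quasiHermitianForm, quasiHermitianForm, hα, starTrace_coe_mul, hnorm]
  ring

theorem starTrace_surjective {β : F} (hβ : starTrace β ≠ 0) :
    Function.Surjective (starTrace : F →+ selfAdjoint F) := fun t =>
  ⟨(t / starTrace β : selfAdjoint F) * β, by rw [starTrace_coe_mul, div_mul_cancel₀ _ hβ]⟩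

variable [CharP F 2]

instance charP_two_selfAdjoint : CharP (selfAdjoint F) 2 :=
  CharTwo.of_one_ne_zero_of_two_eq_zero one_ne_zero <| Subtype.ext <| by
    rw [← one_add_one_eq_two]
    exact CharTwo.add_self_eq_zero (1 : F)

theorem starTrace_eq_zero_iff {x : F} : starTrace x = 0 ↔ IsSelfAdjoint x := by
  rw [Subtype.ext_iff, isSelfAdjoint_iff, eq_comm (a := star x)]
  exact CharTwo.add_eq_zero

theorem quasiHermitianForm_add (α : F) (δ : selfAdjoint F) (x u : F) :
    quasiHermitianForm α δ (x + u) =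
      quasiHermitianForm α δ x + quasiHermitianForm α δ u + δ * starTrace (x * star u) := by
  have hnorm : starNorm (x + u) = starNorm x + starNorm u + starTrace (x * star u) :=
    Subtype.ext <| by
      simp only [starNorm, starTrace, AddMonoidHom.coe_mk, ZeroHom.coe_mk, star_add, star_mul',
        star_star, AddSubgroup.coe_add]
      ring
  rw [quasiHermitianForm, hnorm, CharTwo.add_sq, mul_add, map_add, quasiHermitianForm,
    quasiHermitianForm]
  ring

theorem natCard_ker_starTrace : Nat.card (starTrace : F →+ selfAdjoint F).ker =
    Nat.card (selfAdjoint F) :=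
  Nat.card_congr (Equiv.subtypeEquivRight fun _ => starTrace_eq_zero_iff)

theorem natCard_selfAdjoint_sq {β : F} (hβ : starTrace β ≠ 0) :
    Nat.card (selfAdjoint F) ^ 2 = Nat.card F := by
  rw [← ncard_fiber_mul_natCard (G := F) starTrace (starTrace_surjective hβ) 0, sq,
    ← natCard_ker_starTrace, ← Nat.card_coe_set_eq]
  rfl

variable [Finite F]

theorem quasiHermitianForm_add_starTrace_surjective {β : F} (hβ : starTrace β ≠ 0) (α a : F)
    {δ : selfAdjoint F} (hδ : δ ≠ 0) :
    Function.Surjective fun x => quasiHermitianForm α δ x + starTrace (a * x) := by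
  intro s
  obtain ⟨x₀, hx₀, hax₀⟩ : ∃ x₀ ≠ 0, starTrace (a * x₀) = 0 := by
    rcases eq_or_ne a 0 with rfl | ha
    · exact ⟨1, one_ne_zero, by rw [zero_mul, map_zero]⟩
    · refine ⟨a⁻¹, inv_ne_zero ha, ?_⟩
      rw [mul_inv_cancel₀ ha, starTrace_eq_zero_iff]
      exact IsSelfAdjoint.one F
  -- Along the line `t * x₀` the map is `t ^ 2 * Q x₀`; if `Q x₀ = 0`, a suitable translate of that
  -- line makes it an affine function of `t` with slope one.
  by_cases hQ : quasiHermitianForm α δ x₀ = 0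
  · obtain ⟨w, hw⟩ := starTrace_surjective hβ δ⁻¹
    let u : F := star (x₀⁻¹ * w)
    have hu : δ * starTrace (x₀ * star u) = 1 := by
      rw [star_star, mul_inv_cancel_left₀ hx₀, hw, mul_inv_cancel₀ hδ]
    let t := s - (quasiHermitianForm α δ u + starTrace (a * u))
    refine ⟨t * x₀ + u, ?_⟩
    have hcross : δ * starTrace (t * x₀ * star u) = t := by
      rw [mul_assoc, starTrace_coe_mul, mul_left_comm, hu, mul_one]
    have hlin : starTrace (a * (t * x₀ + u)) = starTrace (a * u) := by
      rw [mul_add, map_add, mul_left_comm, starTrace_coe_mul, hax₀, mul_zero, zero_add]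
    simp only [quasiHermitianForm_add, quasiHermitianForm_coe_mul, hQ, hcross, hlin, t]
    ring
  · obtain ⟨t, ht⟩ := isSquare_of_charTwo' (s / quasiHermitianForm α δ x₀)
    refine ⟨t * x₀, ?_⟩
    simp only [quasiHermitianForm_coe_mul, mul_left_comm a, starTrace_coe_mul, hax₀]
    rw [mul_zero, add_zero, sq, ← ht, div_mul_cancel₀ _ hQ]

theorem not_injective_to_selfAdjoint {β : F} (hβ : starTrace β ≠ 0) (g : F → selfAdjoint F) :
    ¬ Function.Injective g := by
  intro hg
  have hle := Nat.card_le_card_of_injective g hg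
  have hlt : 1 < Nat.card (selfAdjoint F) := Finite.one_lt_card
  rw [← natCard_selfAdjoint_sq hβ] at hle
  nlinarith

end Involution

section AffineCount

variable {F : Type*} [Field F] [StarRing F] [CharP F 2] [Finite F] {k : ℕ}

theorem pow_lt_ncard_mul_of_vertical {β : F} (hβ : starTrace β ≠ 0)
    (φ : (Fin k → F) → selfAdjoint F) {a : Fin k → F} (ha : a ≠ 0) (c : F) :
    Nat.card F ^ k < {p : (Fin k → F) × F |
      c + ∑ i, p.1 i * a i = 0 ∧ starTrace p.2 = φ p.1}.ncard * Nat.card F := by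
  have hlinear : Fintype.linearCombination F a ≠ 0 := by
    obtain ⟨i, hi⟩ := Function.ne_iff.1 ha
    intro h0
    exact hi (by simpa [h0] using (Fintype.linearCombination_apply_single F a i (1 : F)).symm)
  have hhyperplane : {x : Fin k → F | c + ∑ i, x i * a i = 0}.ncard * Nat.card F =
      Nat.card F ^ k := by
    have hcount := ncard_fiber_mul_natCard (Fintype.linearCombination F a).toAddMonoidHom
      (LinearMap.surjective hlinear) (-c)
    rw [Nat.card_fun, Nat.card_fin] at hcount
    rw [← hcount]
    congr 2
    ext x
    exact (eq_neg_iff_add_eq_zero.trans (by rw [add_comm]; rfl)).symm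
  have hfixed : 1 < Nat.card (selfAdjoint F) := Finite.one_lt_card
  have hfibration := ncard_setOf_map_snd_eq starTrace (starTrace_surjective hβ)
    {x : Fin k → F | c + ∑ i, x i * a i = 0} φ
  simp only [Set.mem_ofPred_eq] at hfibration
  rw [hfibration, natCard_ker_starTrace, mul_right_comm, hhyperplane]
  exact lt_mul_of_one_lt_right (pow_pos Nat.card_pos k) hfixed

theorem pow_lt_ncard_of_not_vertical {β : F} (hβ : starTrace β ≠ 0) (α : F) {δ : selfAdjoint F}
    (hδ : δ ≠ 0) (a : Fin (k + 2) → F) {b : F} (hb : b ≠ 0) (c : F) :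
    Nat.card F ^ (k + 1) < {p : (Fin (k + 2) → F) × F |
      c + ∑ i, p.1 i * a i + p.2 * b = 0 ∧
        starTrace p.2 = ∑ i, quasiHermitianForm α δ (p.1 i)}.ncard := by
  let g (i : Fin (k + 2)) (x : F) := quasiHermitianForm α δ x + starTrace (a i / b * x)
  have hg (i) : Function.Surjective (g i) :=
    quasiHermitianForm_add_starTrace_surjective hβ α (a i / b) hδ
  let lift (x : Fin (k + 2) → F) : (Fin (k + 2) → F) × F := (x, -(c + ∑ i, x i * a i) / b)
  have hlift : Function.Injective lift := fun x y hxy => congrArg Prod.fst hxy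
  refine (pow_lt_ncard_setOf_sum_eq g (hg 0) (not_injective_to_selfAdjoint hβ _) (hg 1)
    (starTrace (-c / b))).trans_le ?_
  rw [← Set.ncard_image_of_injective _ hlift]
  refine Set.ncard_le_ncard ?_
  rintro _ ⟨x, hx, rfl⟩
  refine ⟨?_, ?_⟩
  · rw [div_mul_cancel₀ _ hb, add_neg_cancel]
  · have hsplit : (lift x).2 = -c / b - ∑ i, a i / b * x i := by
      simp only [lift, neg_add, ← sub_eq_add_neg, sub_div, Finset.sum_div, mul_comm (x _),
        div_mul_eq_mul_div]
    rw [hsplit, map_sub, map_sum, sub_eq_iff_eq_add, ← Finset.sum_add_distrib]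
    exact hx.symm

theorem pow_lt_ncard_mul_natCard {β : F} (hβ : starTrace β ≠ 0) (α : F) {δ : selfAdjoint F}
    (hδ : δ ≠ 0) {a : Fin (k + 2) → F} {b : F} (hab : a ≠ 0 ∨ b ≠ 0) (c : F) :
    Nat.card F ^ (k + 2) < {p : (Fin (k + 2) → F) × F |
      c + ∑ i, p.1 i * a i + p.2 * b = 0 ∧
        starTrace p.2 = ∑ i, quasiHermitianForm α δ (p.1 i)}.ncard * Nat.card F := by
  rcases eq_or_ne b 0 with rfl | hb
  · simp only [mul_zero, add_zero]
    exact pow_lt_ncard_mul_of_vertical hβ (fun x => ∑ i, quasiHermitianForm α δ (x i))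
      (hab.resolve_right (not_not.2 rfl)) c
  · rw [pow_succ]
    exact Nat.mul_lt_mul_of_pos_right (pow_lt_ncard_of_not_vertical hβ α hδ a hb c) Nat.card_pos

end AffineCount

section FrobeniusInvolution

theorem exists_starRing_star_eq_pow {F : Type*} [Field F] [Finite F] {q : ℕ}
    (hF : Nat.card F = q ^ 2) : ∃ _ : StarRing F, ∀ x : F, star x = x ^ q := by
  cases nonempty_fintype F
  rw [Nat.card_eq_fintype_card] at hF
  obtain ⟨p, _, n, hp, hn⟩ := FiniteField.card' F
  have : Fact p.Prime := ⟨hp⟩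
  obtain ⟨m, -, rfl⟩ : ∃ m ≤ (n : ℕ), q = p ^ m :=
    (Nat.dvd_prime_pow hp).1 ⟨q, by rw [← hn, hF, sq]⟩
  have hinvolutive (x : F) : (x ^ p ^ m) ^ p ^ m = x := by
    rw [← pow_mul, ← sq, ← hF, FiniteField.pow_card]
  exact ⟨{
    star x := x ^ p ^ m
    star_involutive := hinvolutive
    star_mul x y := by rw [mul_comm x, mul_pow]
    star_add x y := add_pow_char_pow x y p m }, fun _ => rfl⟩

theorem charP_two_of_even_natCard {F : Type*} [Field F] [Finite F] (hF : Even (Nat.card F)) :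
    CharP F 2 := by
  cases nonempty_fintype F
  rw [Nat.card_eq_fintype_card, Nat.even_iff] at hF
  exact ringChar.of_eq (FiniteField.even_card_iff_char_two.2 hF)

end FrobeniusInvolution

section Hypersurface

open Module

variable {F : Type*} [Field F] {q : ℕ} {α β : F}

/-- The functional `X₁ + ⋯ + X_{r-1}`, whose kernel cuts out the points at infinity. -/
def middleSum (F : Type*) [Field F] (r : ℕ) : Dual F (Fin (r + 1) → F) :=
  ∑ i : Fin (r + 1), if 1 ≤ i.1 ∧ i.1 < r then LinearMap.proj i else 0

/-- The vector `(1, x₁, …, xₙ, y)` representing an affine point of `PG(n + 1, F)`; the last affine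
coordinate is singled out because it enters the equation of the hypersurface differently. -/
def affineVector {n : ℕ} (p : (Fin n → F) × F) : Fin (n + 1 + 1) → F :=
  Fin.cons 1 (Fin.snoc p.1 p.2)

theorem middleSum_apply {r : ℕ} (v : Fin (r + 1) → F) :
    middleSum F r v = ∑ i : Fin (r + 1), if 1 ≤ i.1 ∧ i.1 < r then v i else 0 := by
  rw [middleSum, LinearMap.sum_apply]
  refine Finset.sum_congr rfl fun i _ => ?_
  split_ifs <;> rfl

theorem middleSum_notMem_span_proj_zero {r : ℕ} (hr : 2 ≤ r) :
    middleSum F r ∉ F ∙ (LinearMap.proj 0 : Dual F (Fin (r + 1) → F)) := by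
  intro hmem
  obtain ⟨c, hc⟩ := Submodule.mem_span_singleton.1 hmem
  let i : Fin (r + 1) := ⟨1, by omega⟩
  have hi : (0 : Fin (r + 1)) ≠ i := Fin.ne_of_val_ne zero_ne_one
  have happly := LinearMap.congr_fun hc (Pi.single i 1)
  rw [middleSum_apply, Finset.sum_eq_single i (fun j _ hj => by simp [hj]) (by simp),
    if_pos ⟨le_rfl, hr⟩] at happly
  simp [hi] at happly

theorem mem_vectorCone_BsetE_of_apply_zero_eq_zero {r : ℕ} {v : Fin (r + 1) → F} (hv : v ≠ 0)
    (hv0 : v 0 = 0) : v ∈ vectorCone (BsetE F q r α β) ↔ middleSum F r v = 0 := by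
  have hrep0 : (Projectivization.mk F v hv).rep 0 = 0 :=
    (dual_rep_mk_eq_zero_iff (LinearMap.proj 0) hv).2 hv0
  rw [← dual_rep_mk_eq_zero_iff _ hv, middleSum_apply]
  simp [vectorCone, BsetE, hv, hrep0]

theorem mem_vectorCone_BsetE_of_apply_zero_eq_one {r : ℕ} {v : Fin (r + 1) → F}
    (hv0 : v 0 = 1) : v ∈ vectorCone (BsetE F q r α β) ↔ affEq q r α β v := by
  have hv : v ≠ 0 := fun h => zero_ne_one ((congrFun h 0).symm.trans hv0)
  obtain ⟨a, ha⟩ := Projectivization.exists_smul_eq_mk_rep F v hv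
  have hrep (i) : (Projectivization.mk F v hv).rep i = a * v i := (congrFun ha i).symm
  simp [vectorCone, BsetE, hv, hrep, hv0]

theorem sum_ite_middle {M : Type*} [AddCommMonoid M] {n : ℕ} (g : Fin (n + 1 + 1) → M) :
    (∑ i : Fin (n + 1 + 1), if 1 ≤ i.1 ∧ i.1 < n + 1 then g i else 0) =
      ∑ i : Fin n, g i.castSucc.succ := by
  rw [Fin.sum_univ_succ, Fin.sum_univ_castSucc]
  simp

theorem dual_affineVector {n : ℕ} (f : Dual F (Fin (n + 1 + 1) → F)) (p : (Fin n → F) × F) :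
    f (affineVector p) = f (Pi.single 0 1) + ∑ i, p.1 i * f (Pi.single i.castSucc.succ 1) +
      p.2 * f (Pi.single (Fin.last _) 1) := by
  have hsingle (i : Fin (n + 1 + 1)) : (fun j => if i = j then (1 : F) else 0) = Pi.single i 1 := by
    ext j
    rw [Pi.single_apply]
    exact if_congr eq_comm rfl rfl
  rw [LinearMap.pi_apply_eq_sum_univ f, Fin.sum_univ_succ, Fin.sum_univ_castSucc]
  simp [affineVector, hsingle, add_assoc]

theorem affineVector_injective {n : ℕ} :
    Function.Injective (affineVector : (Fin n → F) × F → Fin (n + 1 + 1) → F) :=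
  fun _ _ hpq => Prod.ext_iff.2 (Fin.snoc_inj.1 (Fin.cons_inj.1 hpq).2)

theorem exists_affineVector_eq {n : ℕ} {v : Fin (n + 1 + 1) → F} (hv : v 0 = 1) :
    ∃ p, affineVector p = v :=
  ⟨(Fin.init (Fin.tail v), Fin.tail v (Fin.last n)), by
    rw [affineVector, Fin.snoc_init_self, ← hv, Fin.cons_self_tail]⟩

theorem exists_ne_zero_of_notMem_span_proj_zero {n : ℕ} {f : Dual F (Fin (n + 1 + 1) → F)}
    (hf : f ∉ F ∙ (LinearMap.proj 0 : Dual F (Fin (n + 1 + 1) → F))) :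
    (fun i : Fin n => f (Pi.single i.castSucc.succ 1)) ≠ 0 ∨ f (Pi.single (Fin.last _) 1) ≠ 0 := by
  contrapose! hf
  obtain ⟨hmiddle, hlast⟩ := hf
  refine Submodule.mem_span_singleton.2 ⟨f (Pi.single 0 1), LinearMap.pi_ext' fun i => ?_⟩
  refine LinearMap.ext_ring ?_
  induction i using Fin.cases with
  | zero => simp
  | succ i =>
    induction i using Fin.lastCases with
    | last => simpa using hlast.symm
    | cast i => simpa using (congrFun hmiddle i).symm

section Star

variable [StarRing F] [CharP F 2] {n : ℕ}

theorem affEq_affineVector_iff (hstar : ∀ x : F, star x = x ^ q) (p : (Fin n → F) × F) :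
    affEq q (n + 1) α β (affineVector p) ↔
      starTrace p.2 = ∑ i, quasiHermitianForm α (starTrace β) (p.1 i) := by
  have hlast : affineVector p (Fin.last (n + 1)) = p.2 := by
    rw [affineVector, ← Fin.succ_last, Fin.cons_succ, Fin.snoc_last]
  have hmiddle (i : Fin n) : affineVector p i.castSucc.succ = p.1 i := by
    rw [affineVector, Fin.cons_succ, Fin.snoc_castSucc]
  have hform (x : F) : (quasiHermitianForm α (starTrace β) x : F) =
      α ^ q * x ^ (2 * q) + α * x ^ 2 + (β ^ q + β) * x ^ (q + 1) := by
    simp only [quasiHermitianForm, starTrace, starNorm, AddMonoidHom.coe_mk, ZeroHom.coe_mk,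
      AddSubgroup.coe_add, selfAdjoint.val_mul, hstar]
    ring
  rw [affEq, sum_ite_middle, sum_ite_middle, sum_ite_middle, hlast, Subtype.ext_iff,
    AddSubgroup.val_finsetSum]
  simp only [hmiddle, hform, Finset.sum_add_distrib, ← Finset.mul_sum, CharTwo.sub_eq_add]
  have htrace : (starTrace p.2 : F) = p.2 + p.2 ^ q := congrArg (p.2 + ·) (hstar p.2)
  rw [htrace, ← CharTwo.add_eq_zero, ← CharTwo.add_eq_zero (a := p.2 + _)]
  refine Eq.congr_left ?_
  ring

theorem affineVector_mem_vectorCone_BsetE_iff (hstar : ∀ x : F, star x = x ^ q)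
    (p : (Fin n → F) × F) : affineVector p ∈ vectorCone (BsetE F q (n + 1) α β) ↔
      starTrace p.2 = ∑ i, quasiHermitianForm α (starTrace β) (p.1 i) :=
  (mem_vectorCone_BsetE_of_apply_zero_eq_one rfl).trans (affEq_affineVector_iff hstar p)

theorem setOf_mem_vectorCone_BsetE_eq_image (hstar : ∀ x : F, star x = x ^ q)
    (P : (Fin (n + 1 + 1) → F) → Prop) :
    {v ∈ vectorCone (BsetE F q (n + 1) α β) | P v ∧ v 0 = 1} =
      affineVector '' {p | P (affineVector p) ∧
        starTrace p.2 = ∑ i, quasiHermitianForm α (starTrace β) (p.1 i)} := by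
  ext v
  constructor
  · rintro ⟨hv, hPv, hv0⟩
    obtain ⟨p, rfl⟩ := exists_affineVector_eq hv0
    exact ⟨p, ⟨hPv, (affineVector_mem_vectorCone_BsetE_iff hstar p).1 hv⟩, rfl⟩
  · rintro ⟨p, ⟨hPp, hp⟩, rfl⟩
    exact ⟨(affineVector_mem_vectorCone_BsetE_iff hstar p).2 hp, hPp, rfl⟩

theorem ncard_vectorCone_BsetE_affine (hstar : ∀ x : F, star x = x ^ q) (hβ : starTrace β ≠ 0) :
    {v ∈ vectorCone (BsetE F q (n + 1) α β) | v 0 = 1}.ncard =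
      Nat.card F ^ n * Nat.card (selfAdjoint F) := by
  have hfibration := ncard_setOf_map_snd_eq starTrace (starTrace_surjective hβ) Set.univ
    fun x : Fin n → F => ∑ i, quasiHermitianForm α (starTrace β) (x i)
  simp only [Set.mem_univ, true_and] at hfibration
  have haffine := setOf_mem_vectorCone_BsetE_eq_image (n := n) (α := α) (β := β) hstar
    fun _ => True
  simp only [true_and] at haffine
  rw [haffine, Set.ncard_image_of_injective _ affineVector_injective, hfibration,
    natCard_ker_starTrace, Set.ncard_univ, Nat.card_fun, Nat.card_fin]

theorem ncard_support_cw_proj_zero (hF : Nat.card F = q ^ 2)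
    (hstar : ∀ x : F, star x = x ^ q) (hβ : starTrace β ≠ 0) :
    (cw (BsetE F q (n + 1) α β) (LinearMap.proj 0)).support.ncard = q ^ (2 * n + 1) := by
  have hfixed : Nat.card (selfAdjoint F) = q :=
    Nat.pow_left_injective two_ne_zero ((natCard_selfAdjoint_sq hβ).trans hF)
  rw [ncard_support_cw, pow_succ, pow_mul, ← hF]
  exact (ncard_vectorCone_BsetE_affine hstar hβ).trans (by rw [hfixed])

theorem isHyperplaneRich_BsetE [Finite F] {k : ℕ} (hstar : ∀ x : F, star x = x ^ q)
    (hβ : starTrace β ≠ 0) :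
    IsHyperplaneRich (BsetE F q (k + 2 + 1) α β) (LinearMap.proj 0)
      (middleSum F (k + 2 + 1)) where
  mem_iff _ hv hv0 := mem_vectorCone_BsetE_of_apply_zero_eq_zero hv hv0
  notMem_span := middleSum_notMem_span_proj_zero (by omega)
  card_lt f hf := by
    have hcount := pow_lt_ncard_mul_natCard hβ α hβ (exists_ne_zero_of_notMem_span_proj_zero hf)
      (f (Pi.single 0 1))
    simp only [← dual_affineVector] at hcount
    change Nat.card _ < {v ∈ vectorCone _ | f v = 0 ∧ v 0 = 1}.ncard * _
    rw [setOf_mem_vectorCone_BsetE_eq_image hstar fun v => f v = 0,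
      Set.ncard_image_of_injective _ affineVector_injective, pow_succ' (Nat.card F) 2,
      ← mul_assoc, Nat.card_fun, Nat.card_fin, pow_add (Nat.card F) (k + 2) 2]
    exact Nat.mul_lt_mul_of_pos_right hcount (pow_pos Nat.card_pos 2)

end Star

theorem exists_starRing_starTrace_ne_zero [Finite F] (hF : Nat.card F = q ^ 2) (hβ : β ^ q ≠ β)
    [CharP F 2] : ∃ _ : StarRing F, (∀ x : F, star x = x ^ q) ∧ starTrace β ≠ 0 := by
  obtain ⟨_, hstar⟩ := exists_starRing_star_eq_pow hF
  refine ⟨_, hstar, fun h => hβ ?_⟩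
  rw [← hstar]
  exact starTrace_eq_zero_iff.1 h

end Hypersurface

theorem statement10_general {F : Type*} [Field F] [Finite F] {q r : ℕ} (hqeven : Even q)
    (hr : 3 ≤ r) (hF : Nat.card F = q ^ 2) (α : F) {β : F} (hβ : β ^ q ≠ β) :
    ¬ IsMinimalCode (BsetE F q r α β) ∧
    (∀ f : Module.Dual F (Fin (r + 1) → F), cw (BsetE F q r α β) f ≠ 0 →
      (¬ IsMinimalWord (BsetE F q r α β) f ↔
        ∃ c : F, c ≠ 0 ∧ f = c • (LinearMap.proj 0 : (Fin (r + 1) → F) →ₗ[F] F))) ∧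
    (∀ f : Module.Dual F (Fin (r + 1) → F), cw (BsetE F q r α β) f ≠ 0 →
      ((∃ c : F, c ≠ 0 ∧ f = c • (LinearMap.proj 0 : (Fin (r + 1) → F) →ₗ[F] F)) ↔
        Nat.card {P : ↥(BsetE F q r α β) | cw (BsetE F q r α β) f P ≠ 0} =
          q ^ (2 * r - 1))) ∧
    Nat.card {c : ↥(BsetE F q r α β) → F |
        (∃ f : Module.Dual F (Fin (r + 1) → F), c = cw (BsetE F q r α β) f) ∧
        Nat.card {P : ↥(BsetE F q r α β) | c P ≠ 0} = q ^ (2 * r - 1)} = q ^ 2 - 1 := by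
  have : CharP F 2 := charP_two_of_even_natCard (hF ▸ hqeven.pow_of_ne_zero two_ne_zero)
  obtain ⟨k, rfl⟩ : ∃ k, r = k + 2 + 1 := ⟨r - 3, by omega⟩
  obtain ⟨_, hstar, hβ'⟩ := exists_starRing_starTrace_ne_zero hF hβ
  have hB := isHyperplaneRich_BsetE (k := k) (α := α) hstar hβ'
  have hweight := ncard_support_cw_proj_zero (n := k + 2) (α := α) hF hstar hβ'
  have hsupport (w : BsetE F q (k + 2 + 1) α β → F) :
      Nat.card {P | w P ≠ 0} = w.support.ncard :=
    Nat.card_coe_set_eq w.support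
  have hexp : 2 * (k + 2 + 1) - 1 = 2 * (k + 2) + 1 := by omega
  simp only [hsupport, hexp, ← hweight, ← hF]
  refine ⟨hB.not_isMinimalCode, fun f hf => hB.not_isMinimalWord_iff hf,
    fun f _ => hB.ncard_support_cw_eq_iff.symm, ?_⟩
  exact (Nat.card_coe_set_eq _).trans hB.ncard_setOf_ncard_support_eq

/-- for `q > 2` even and `r ≥ 3`, `C(B)` is not minimal; a nonzero
codeword is non-minimal iff it corresponds to a nonzero scalar multiple of the
coordinate functional `X₀`, iff it has weight `q^{2r−1}`; and there are exactly
`q²−1` codewords of weight `q^{2r−1}`. -/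
theorem statement10 (q r : ℕ) (hq : IsPrimePow q) (hqeven : Even q) (hq2 : 2 < q)
    (hr : 3 ≤ r)
    (F : Type) [Field F] [Fintype F] (hF : Fintype.card F = q ^ 2)
    (α β : F) (hα : α ≠ 0) (hβ : β ^ q ≠ β)
    (hcond : Odd r ∨ (Even r ∧ ∀ m : ℕ, q = 2 ^ m →
      ∑ i ∈ Finset.range m, (α ^ (q + 1) / (β ^ q + β) ^ 2) ^ 2 ^ i = 0)) :
    ¬ IsMinimalCode (BsetE F q r α β) ∧
    (∀ f : Module.Dual F (Fin (r + 1) → F), cw (BsetE F q r α β) f ≠ 0 →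
      (¬ IsMinimalWord (BsetE F q r α β) f ↔
        ∃ c : F, c ≠ 0 ∧ f = c • (LinearMap.proj 0 : (Fin (r + 1) → F) →ₗ[F] F))) ∧
    (∀ f : Module.Dual F (Fin (r + 1) → F), cw (BsetE F q r α β) f ≠ 0 →
      ((∃ c : F, c ≠ 0 ∧ f = c • (LinearMap.proj 0 : (Fin (r + 1) → F) →ₗ[F] F)) ↔
        Nat.card {P : ↥(BsetE F q r α β) | cw (BsetE F q r α β) f P ≠ 0} =
          q ^ (2 * r - 1))) ∧
    Nat.card {c : ↥(BsetE F q r α β) → F |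
        (∃ f : Module.Dual F (Fin (r + 1) → F), c = cw (BsetE F q r α β) f) ∧
        Nat.card {P : ↥(BsetE F q r α β) | c P ≠ 0} = q ^ (2 * r - 1)} = q ^ 2 - 1 := by
  exact statement10_general hqeven hr (Nat.card_eq_fintype_card.trans hF) α hβ
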